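/- Let α ∈ ℝ be a Liouville number. Then for every M > 0 there exist τ ∈ ℤ and ℓ ∈ ℕ with ℓ ≥ 1 such that (τ + α·ℓ)² < (√(1 + τ² + ℓ·(ℓ+1)))^{−M}. -/

import Mathlib

theorem stmt12 (α : ℝ) (hα : Liouville α) :
    ∀ M : ℝ, 0 < M → ∃ τ : ℤ, ∃ l : ℕ, 1 ≤ l ∧
      (τ + α * l) ^ 2 <
        (Real.sqrt (1 + (τ : ℝ) ^ 2 + (l : ℝ) * ((l : ℝ) + 1))) ^ (-M : ℝ) := by
  intro M hM
  obtain ⟨N, hN⟩ := exists_nat_ge M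
  obtain ⟨k, hk⟩ := pow_unbounded_of_one_lt (|α| + 3) (one_lt_two (α := ℝ))
  obtain ⟨a, b, hb, hne, hlt⟩ := hα ((k + 1) * N + 1)
  lift b to ℕ using by omega
  refine ⟨-a, b, by omega, ?_⟩
  have hb2 : (2 : ℝ) ≤ (b : ℝ) := by exact_mod_cast (by omega : 2 ≤ b)
  have hb0 : (0 : ℝ) < (b : ℝ) := by linarith
  push_cast at hlt ⊢
  have h1 : |-(a : ℝ) + α * b| < 1 / (b : ℝ) ^ ((k + 1) * N) := by
    have e : -(a : ℝ) + α * b = (α - a / b) * b := by field_simp; ring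
    rw [e, abs_mul, abs_of_pos hb0]
    calc _ < 1 / (b : ℝ) ^ ((k + 1) * N + 1) * b := by gcongr
      _ = _ := by rw [pow_succ]; field_simp
  have hP : (1 : ℝ) ≤ (b : ℝ) ^ ((k + 1) * N) := one_le_pow₀ (by linarith)
  have h2 : |-(a : ℝ) + α * b| < 1 :=
    h1.trans_le (by rw [div_le_one (by linarith)]; exact hP)
  have ha : |(a : ℝ)| ≤ (|α| + 1) * b := by
    have e : (a : ℝ) = α * b - (-(a : ℝ) + α * b) := by ring
    have := abs_sub (α * b) (-(a : ℝ) + α * b)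
    rw [← e, abs_mul, abs_of_pos hb0] at this
    linarith
  have ha2 : (a : ℝ) ^ 2 ≤ ((|α| + 1) * b) ^ 2 := by
    rw [← sq_abs (a : ℝ)]; gcongr
  have hα0 := abs_nonneg α
  set S := Real.sqrt (1 + (-(a : ℝ)) ^ 2 + (b : ℝ) * ((b : ℝ) + 1)) with hS
  have hS1 : 1 ≤ S := by
    rw [hS, Real.one_le_sqrt]
    nlinarith [sq_nonneg (a : ℝ)]
  have hSb : S ≤ (b : ℝ) ^ (k + 1) := by
    have : S ≤ (|α| + 3) * b := by
      apply Real.sqrt_le_iff.mpr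
      refine ⟨by positivity, ?_⟩
      have : 0 ≤ |α| * (b : ℝ) ^ 2 := by positivity
      nlinarith
    refine this.trans ?_
    rw [pow_succ]
    gcongr
    exact hk.le.trans (by gcongr)
  have hSM : S ^ M ≤ (b : ℝ) ^ ((k + 1) * N) := by
    calc S ^ M ≤ S ^ (N : ℝ) := Real.rpow_le_rpow_of_exponent_le hS1 hN
      _ = S ^ N := Real.rpow_natCast _ _
      _ ≤ ((b : ℝ) ^ (k + 1)) ^ N := by gcongr
      _ = _ := by rw [pow_mul]
  have hS0 : 0 < S ^ M := Real.rpow_pos_of_pos (by linarith) _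
  rw [Real.rpow_neg (by linarith), ← one_div]
  calc _ = |-(a : ℝ) + α * b| ^ 2 := (sq_abs _).symm
    _ ≤ |-(a : ℝ) + α * b| := by nlinarith [abs_nonneg (-(a : ℝ) + α * b)]
    _ < _ := h1
    _ ≤ _ := by gcongr
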